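/- arXiv:1405.6408 — 2 statements merged into one kernel-verified Lean document; each statement's English description precedes it below -/
import Mathlib

section
/- Let n be a positive integer and let f_1,…,f_n, g_1,…,g_n : [0,∞) → ℝ be measurable functions such that the product λ ↦ f_i(λ)·g_j(λ) is Lebesgue integrable on [0,∞) for all 1 ≤ i,j ≤ n. Then ∫_{0 ≤ λ_n ≤ λ_{n−1} ≤ … ≤ λ_1 < ∞} det[f_i(λ_j)]_{i,j=1}^n · det[g_i(λ_j)]_{i,j=1}^n dλ_1 ⋯ dλ_n = det[ ∫_0^∞ f_i(λ)·g_j(λ) dλ ]_{i,j=1}^n, where det[h(i,j)]_{i,j=1}^n denotes the determinant of the n×n matrix with (i,j) entry h(i,j). -/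
open MeasureTheory Matrix Set

/-!
The function `F l = (∏ j, f j (l j)) * det (g i (l j))` is the determinant of a matrix whose `j`-th
column depends on `l j` alone, so by Fubini its integral over the whole product space is the
determinant of the matrix of integrals. As the determinant is alternating in the columns, summing
`F` over the permutations of the variables gives `det (f i (l j)) * det (g i (l j))`. Finally `F`
vanishes on tuples with a repeated entry, and every other tuple is sorted by exactly one
permutation, so integrating this sum over the sorted tuples is integrating `F` over all tuples.
-/

section Determinant

variable {ι R : Type*} [Fintype ι] [DecidableEq ι] [CommRing R]

theorem det_mul_det_eq_sum_perm (A B : Matrix ι ι R) :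
    A.det * B.det = ∑ σ : Equiv.Perm ι, (∏ j, A j (σ j)) * (B.submatrix id σ).det := by
  rw [← A.det_transpose, det_apply', Finset.sum_mul]
  refine Finset.sum_congr rfl fun σ _ ↦ ?_
  simp only [det_permute', transpose_apply]
  ring

theorem det_mul_det_eq_sum_det_comp_perm {α : Type*} (f g : ι → α → R) (l : ι → α) :
    (of fun i j ↦ f i (l j)).det * (of fun i j ↦ g i (l j)).det =
      ∑ σ : Equiv.Perm ι, (of fun i j ↦ f j ((l ∘ σ) j) * g i ((l ∘ σ) j)).det := by
  rw [det_mul_det_eq_sum_perm]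
  exact Finset.sum_congr rfl fun σ _ ↦
    (det_mul_row (fun j ↦ f j (l (σ j))) (of fun i j ↦ g i (l (σ j)))).symm

theorem det_mul_eq_zero_of_not_injective {α : Type*} (f g : ι → α → R) {l : ι → α}
    (hl : ¬ Function.Injective l) : (of fun i j ↦ f j (l j) * g i (l j)).det = 0 := by
  obtain ⟨j, k, hjk, hne⟩ := Function.not_injective_iff.mp hl
  have hdet : (of fun i j ↦ g i (l j)).det = 0 :=
    det_zero_of_column_eq hne fun i ↦ by simp only [of_apply, hjk]
  exact (det_mul_row (fun j ↦ f j (l j)) (of fun i j ↦ g i (l j))).trans <| by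
    rw [hdet, mul_zero]

end Determinant

section IntegralDeterminant

variable {ι 𝕜 : Type*} [Fintype ι] [DecidableEq ι] [RCLike 𝕜] {X : ι → Type*}
  [∀ j, MeasurableSpace (X j)] {μ : ∀ j, Measure (X j)} [∀ j, SigmaFinite (μ j)]
  {h : ι → ∀ j, X j → 𝕜}

theorem integrable_sign_mul_prod (hh : ∀ i j, Integrable (h i j) (μ j)) (σ : Equiv.Perm ι) :
    Integrable (fun l : ∀ j, X j ↦ ((σ.sign : ℤ) : 𝕜) * ∏ j, h (σ j) j (l j)) (Measure.pi μ) :=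
  (Integrable.fintype_prod_dep fun j ↦ hh (σ j) j).const_mul _

theorem integrable_det_pi (hh : ∀ i j, Integrable (h i j) (μ j)) :
    Integrable (fun l : ∀ j, X j ↦ (of fun i j ↦ h i j (l j)).det) (Measure.pi μ) := by
  simp only [det_apply', of_apply]
  exact integrable_finsetSum _ fun σ _ ↦ integrable_sign_mul_prod hh σ

theorem integral_det_pi (hh : ∀ i j, Integrable (h i j) (μ j)) :
    ∫ l : ∀ j, X j, (of fun i j ↦ h i j (l j)).det ∂Measure.pi μ =
      (of fun i j ↦ ∫ x, h i j x ∂μ j).det := by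
  simp only [det_apply', of_apply]
  rw [integral_finsetSum _ fun σ _ ↦ integrable_sign_mul_prod hh σ]
  refine Finset.sum_congr rfl fun σ _ ↦ ?_
  rw [integral_const_mul, integral_fintype_prod_eq_prod fun j ↦ h (σ j) j]

end IntegralDeterminant

section Sorting

variable {n : ℕ} {α : Type*} [LinearOrder α]

theorem existsUnique_perm_antitone_comp {l : Fin n → α} (hl : Function.Injective l) :
    ∃! σ : Equiv.Perm (Fin n), Antitone (l ∘ σ) := by
  have hsort : Antitone (l ∘ Tuple.sort (OrderDual.toDual ∘ l)) :=
    Tuple.monotone_sort (OrderDual.toDual ∘ l)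
  refine ⟨_, hsort, fun τ hτ ↦ Equiv.ext fun i ↦ hl ?_⟩
  exact congrFun (Tuple.unique_antitone hτ hsort) i

theorem sum_perm_indicator_antitone_comp {M : Type*} [AddCommMonoid M] {F : (Fin n → α) → M}
    (hF : ∀ l, ¬ Function.Injective l → F l = 0) (l : Fin n → α) :
    ∑ σ : Equiv.Perm (Fin n), {l : Fin n → α | Antitone (l ∘ σ)}.indicator F l = F l := by
  by_cases hl : Function.Injective l
  · obtain ⟨σ, hσ, hunique⟩ := existsUnique_perm_antitone_comp hl
    rw [Finset.sum_eq_single_of_mem σ (Finset.mem_univ σ), indicator_of_mem hσ]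
    exact fun τ _ hτσ ↦ indicator_of_notMem (fun hτ ↦ hτσ (hunique τ hτ)) F
  · simp only [indicator_apply, hF l hl, ite_self, Finset.sum_const_zero]

end Sorting

section PiMeasure

theorem restrict_pi_restrict {ι : Type*} [Fintype ι] {X : ι → Type*} [∀ i, MeasurableSpace (X i)]
    (μ : ∀ i, Measure (X i)) [∀ i, SigmaFinite (μ i)] (s : ∀ i, Set (X i)) {t : Set (∀ i, X i)}
    (ht : MeasurableSet t) :
    (Measure.pi fun i ↦ (μ i).restrict (s i)).restrict t =
      (Measure.pi μ).restrict {l | (∀ i, l i ∈ s i) ∧ l ∈ t} := by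
  have hset : {l | (∀ i, l i ∈ s i) ∧ l ∈ t} = t ∩ univ.pi s := by
    ext l
    simp only [mem_ofPred_eq, mem_inter_iff, mem_univ_pi, and_comm]
  rw [← Measure.restrict_pi_pi, Measure.restrict_restrict ht, hset]

theorem measurableSet_antitone_comp {ι κ α : Type*} [Countable ι] [Preorder κ] [Preorder α]
    [TopologicalSpace α] [OrderClosedTopology α] [SecondCountableTopology α] [MeasurableSpace α]
    [OpensMeasurableSpace α] (φ : κ → ι) : MeasurableSet {l : ι → α | Antitone (l ∘ φ)} :=
  (isClosed_antitone.preimage (by fun_prop : Continuous fun l : ι → α ↦ l ∘ φ)).measurableSet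

theorem measurePreserving_comp_perm {ι α : Type*} [Fintype ι] [MeasurableSpace α] (μ : Measure α)
    [SigmaFinite μ] (σ : Equiv.Perm ι) :
    MeasurePreserving (fun l : ι → α ↦ l ∘ σ) (Measure.pi fun _ ↦ μ) (Measure.pi fun _ ↦ μ) :=
  measurePreserving_arrowCongr' (fun _ ↦ μ) (fun _ ↦ μ) σ.symm (MeasurableEquiv.refl α)
    fun _ ↦ MeasurePreserving.id μ

theorem setIntegral_preimage_comp_perm {E : Type*} [NormedAddCommGroup E] [NormedSpace ℝ E]
    {ι α : Type*} [Fintype ι] [MeasurableSpace α] (μ : Measure α) [SigmaFinite μ]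
    (σ : Equiv.Perm ι) (F : (ι → α) → E) (s : Set (ι → α)) :
    ∫ l in (· ∘ σ) ⁻¹' s, F l ∂Measure.pi (fun _ ↦ μ) =
      ∫ l in s, F (l ∘ σ.symm) ∂Measure.pi (fun _ ↦ μ) := by
  have hemb : MeasurableEmbedding fun l : ι → α ↦ l ∘ σ :=
    (MeasurableEquiv.arrowCongr' σ.symm (MeasurableEquiv.refl α)).measurableEmbedding
  simpa only [Function.comp_assoc, Equiv.self_comp_symm, Function.comp_id] using
    (measurePreserving_comp_perm μ σ).setIntegral_preimage_emb hemb (fun l ↦ F (l ∘ σ.symm)) s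

end PiMeasure

section SortedTuples

variable {n : ℕ} {α : Type*} [LinearOrder α] [TopologicalSpace α] [OrderClosedTopology α]
  [SecondCountableTopology α] [MeasurableSpace α] [OpensMeasurableSpace α]

theorem integral_eq_setIntegral_antitone_sum_perm {E : Type*} [NormedAddCommGroup E]
    [NormedSpace ℝ E] {μ : Measure α} [SigmaFinite μ] {F : (Fin n → α) → E}
    (hF : Integrable F (Measure.pi fun _ ↦ μ)) (hF₀ : ∀ l, ¬ Function.Injective l → F l = 0) :
    ∫ l, F l ∂Measure.pi (fun _ ↦ μ) =
      ∫ l in {l | Antitone l}, ∑ σ : Equiv.Perm (Fin n), F (l ∘ σ) ∂Measure.pi (fun _ ↦ μ) :=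
  calc ∫ l, F l ∂Measure.pi (fun _ ↦ μ)
    _ = ∫ l, ∑ σ : Equiv.Perm (Fin n), {l : Fin n → α | Antitone (l ∘ σ)}.indicator F l
          ∂Measure.pi (fun _ ↦ μ) := by
      simp only [sum_perm_indicator_antitone_comp hF₀]
    _ = ∑ σ : Equiv.Perm (Fin n), ∫ l, {l : Fin n → α | Antitone (l ∘ σ)}.indicator F l
          ∂Measure.pi (fun _ ↦ μ) :=
      integral_finsetSum _ fun σ _ ↦ hF.indicator (measurableSet_antitone_comp σ)
    _ = ∑ σ : Equiv.Perm (Fin n), ∫ l in {l | Antitone (l ∘ σ)}, F l ∂Measure.pi (fun _ ↦ μ) := by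
      simp only [← integral_indicator (measurableSet_antitone_comp _)]
    _ = ∑ σ : Equiv.Perm (Fin n),
          ∫ l in {l | Antitone l}, F (l ∘ σ.symm) ∂Measure.pi (fun _ ↦ μ) :=
      Finset.sum_congr rfl fun σ _ ↦ setIntegral_preimage_comp_perm μ σ F {l | Antitone l}
    _ = ∑ σ : Equiv.Perm (Fin n), ∫ l in {l | Antitone l}, F (l ∘ σ) ∂Measure.pi (fun _ ↦ μ) :=
      Equiv.sum_comp (Equiv.inv (Equiv.Perm (Fin n))) fun σ : Equiv.Perm (Fin n) ↦
        ∫ l in {l | Antitone l}, F (l ∘ σ) ∂Measure.pi (fun _ ↦ μ)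
    _ = ∫ l in {l | Antitone l}, ∑ σ : Equiv.Perm (Fin n), F (l ∘ σ) ∂Measure.pi (fun _ ↦ μ) :=
      (integral_finsetSum _ fun σ _ ↦
        ((measurePreserving_comp_perm μ σ).integrable_comp_of_integrable hF).integrableOn).symm

theorem andreief_identity_general {𝕜 : Type*} [RCLike 𝕜] {μ : Measure α} [SigmaFinite μ]
    {f g : Fin n → α → 𝕜} (hint : ∀ i j, Integrable (fun x ↦ f i x * g j x) μ) :
    ∫ l in {l : Fin n → α | Antitone l},
        (of fun i j ↦ f i (l j)).det * (of fun i j ↦ g i (l j)).det ∂Measure.pi (fun _ ↦ μ) =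
      (of fun i j ↦ ∫ x, f i x * g j x ∂μ).det := by
  have hint' : ∀ i j, Integrable (fun x ↦ f j x * g i x) μ := fun i j ↦ hint j i
  simp only [det_mul_det_eq_sum_det_comp_perm]
  rw [← integral_eq_setIntegral_antitone_sum_perm (integrable_det_pi hint') fun _ ↦
    det_mul_eq_zero_of_not_injective f g, integral_det_pi hint']
  exact det_transpose (of fun i j ↦ ∫ x, f i x * g j x ∂μ)

end SortedTuples

/-- Andréief-type determinant integration identity.  The integral of a
product of two determinants `det [f i (λ j)] · det [g i (λ j)]` over the ordered simplex
`{0 ≤ λ_n ≤ … ≤ λ_1 < ∞}` equals the determinant of the matrix of pairwise integrals. -/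
theorem andreief_identity (n : ℕ) (hn : 0 < n) (f g : Fin n → ℝ → ℝ)
    (hf : ∀ i, Measurable fun x : Set.Ici (0 : ℝ) => f i x)
    (hg : ∀ i, Measurable fun x : Set.Ici (0 : ℝ) => g i x)
    (hint : ∀ i j, IntegrableOn (fun x => f i x * g j x) (Set.Ici (0 : ℝ))) :
    (∫ l in {l : Fin n → ℝ | (∀ i, 0 ≤ l i) ∧ Antitone l},
        (Matrix.of fun i j => f i (l j)).det * (Matrix.of fun i j => g i (l j)).det)
      = (Matrix.of fun i j => ∫ x in Set.Ici (0 : ℝ), f i x * g j x).det := by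
  rw [← andreief_identity_general hint,
    restrict_pi_restrict _ _ isClosed_antitone.measurableSet, volume_pi]
  rfl
end

section
/- Fix a positive integer p, positive integers a < b, set c = a/b ∈ (0,1), and fix an integer N ≥ 0. For a positive integer t set n = a·t and m = b·t. Then there exist a constant C > 0 and a positive integer T such that for all integers t ≥ T (in particular p < n(m−n+1)), |μ0(p,n,m) − Σ_{j=0}^N β_{p,j}(c)/n^{2j}| ≤ C·n^{−2(N+1)}. -/
open Finset
open Finset

/-- Exact `p`-th moment of the GLRT statistic under `H₀`. -/
noncomputable def mu0 (p n m : ℕ) : ℝ :=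
  Real.Gamma ((m : ℝ) * n) / ((n : ℝ) ^ p * Real.Gamma ((m : ℝ) * n - p)) *
    ∏ j ∈ Finset.range n,
      Real.Gamma ((m : ℝ) - n + 1 - p / n + j) / Real.Gamma ((m : ℝ) - n + 1 + j)

/-- Rising factorial `(a)_r = a (a+1) ⋯ (a+r-1)` as a real number. -/
noncomputable def risingFactorial (a : ℕ) (r : ℕ) : ℝ :=
  ∏ i ∈ Finset.range r, ((a : ℝ) + i)

/-- Coefficients `A_{p,q}(c)` of the asymptotic expansion of `ln μ0`. -/
noncomputable def Acoef (p : ℕ) (c : ℝ) : ℕ → ℝ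
  | 0 => p - p * (1 - 1 / c) * Real.log (1 - c)
  | 1 => -((p : ℝ) ^ 2 / 2) * Real.log (1 - c)
          + c * p * (12 - 11 * c + 6 * (1 - (p : ℝ)) * (c - 1)) / (12 * (c - 1))
  | (q + 2) =>
      (c * p) ^ (q + 2) * (c + 12 * p - 12 * c * p - c * ((q + 2 : ℕ) : ℝ) ^ 2)
          / (12 * c * ((q + 2 : ℕ) : ℝ) * (((q + 2 : ℕ) : ℝ) ^ 2 - 1) * (1 - c) ^ (q + 2))
        + (c * p) ^ (q + 2) * (-12 * p + c * (((q + 2 : ℕ) : ℝ) ^ 2 - 1))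
          / (12 * c * ((q + 2 : ℕ) : ℝ) * (((q + 2 : ℕ) : ℝ) ^ 2 - 1))
        - (c ^ (q + 2) / ((q + 2 : ℕ) : ℝ)) * ∑ j ∈ Finset.Icc 1 p, (j : ℝ) ^ (q + 2)
        + ∑ j ∈ Finset.Icc 1 (q + 1),
            (bernoulli (2 * j + 2) : ℝ) * c ^ (2 * j) * risingFactorial (2 * j) (q + 2 - j)
              * (p * c) ^ (q + 2 - j)
              / (4 * j * (j + 1) * (Nat.factorial (q + 2 - j)))
              * (1 - (1 - c) ^ (-(j : ℤ) - (q + 2 : ℤ)))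

/-- Coefficients `β_{p,j}(c)` of the asymptotic expansion of `μ0`. -/
noncomputable def bcoef (p : ℕ) (c : ℝ) (j : ℕ) : ℝ :=
  Real.exp (Acoef p c 0) *
    ∑ i ∈ Finset.univ.filter
        (fun i : Fin j → Fin (j + 1) => ∑ r : Fin j, (r.1 + 1) * (i r).1 = j),
      ∏ r : Fin j, (Acoef p c (r.1 + 1)) ^ (i r).1 / (Nat.factorial (i r).1)

/-!
Since `log Γ(z) = log G(z + 1) - log G(z)` for the Barnes `G`-function, the Gamma product in `mu0`
telescopes. No theory of `G` is needed: `barnesApprox K`, its truncated Stirling series, has second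
difference `log z + O(z ^ (-2 * K - 2))` by an identity between Bernoulli numbers, so
`log Γ(z) - (barnesApprox K z - barnesApprox K (z - 1))` is almost `1`-periodic; log-convexity of
`Γ` makes it almost constant over unit intervals, and then it cancels between numerator and
denominator. Up to `O(n ^ (-2 * (N + 1)))` this leaves for `log (mu0 p n m)` an explicit function of
`c = n / m` and `x = n⁻¹ ^ 2`, analytic at `x = 0`, whose Taylor coefficients are the `Acoef p c q`;
exponentiating gives the `bcoef p c j`.
-/

section PowerSeries

open Filter Topology Asymptotics PowerSeries

/-- `f` is the sum of the convergent power series `φ` in a neighbourhood of `0`. -/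
def HasPowerSeriesAtZero (f : ℝ → ℝ) (φ : ℝ⟦X⟧) : Prop :=
  ∀ᶠ x in 𝓝 0, HasSum (fun q => coeff q φ * x ^ q) (f x)

namespace HasPowerSeriesAtZero

variable {f g : ℝ → ℝ} {φ ψ : ℝ⟦X⟧}

lemma congr (hf : HasPowerSeriesAtZero f φ) (h : f =ᶠ[𝓝 0] g) : HasPowerSeriesAtZero g φ := by
  filter_upwards [hf, h] with x hx hfg
  rwa [← hfg]

lemma one : HasPowerSeriesAtZero (fun _ => 1) 1 :=
  .of_forall fun x => by
    convert hasSum_ite_eq 0 (1 : ℝ) using 2 with q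
    rcases eq_or_ne q 0 with rfl | hq <;> simp [coeff_one, *]

lemma add (hf : HasPowerSeriesAtZero f φ) (hg : HasPowerSeriesAtZero g ψ) :
    HasPowerSeriesAtZero (fun x => f x + g x) (φ + ψ) := by
  filter_upwards [hf, hg] with x hx hy
  simpa only [map_add, add_mul] using hx.add hy

lemma sub (hf : HasPowerSeriesAtZero f φ) (hg : HasPowerSeriesAtZero g ψ) :
    HasPowerSeriesAtZero (fun x => f x - g x) (φ - ψ) := by
  filter_upwards [hf, hg] with x hx hy
  simpa only [map_sub, sub_mul] using hx.sub hy

lemma const_mul (a : ℝ) (hf : HasPowerSeriesAtZero f φ) :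
    HasPowerSeriesAtZero (fun x => a * f x) (C a * φ) := by
  filter_upwards [hf] with x hx
  simpa only [coeff_C_mul, mul_assoc] using hx.mul_left a

lemma sum {ι : Type*} (s : Finset ι) {f : ι → ℝ → ℝ} {φ : ι → ℝ⟦X⟧}
    (h : ∀ i ∈ s, HasPowerSeriesAtZero (f i) (φ i)) :
    HasPowerSeriesAtZero (fun x => ∑ i ∈ s, f i x) (∑ i ∈ s, φ i) := by
  filter_upwards [(Finset.eventually_all s).2 h] with x hx
  simpa only [map_sum, Finset.sum_mul] using hasSum_sum hx

lemma mul (hf : HasPowerSeriesAtZero f φ) (hg : HasPowerSeriesAtZero g ψ) :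
    HasPowerSeriesAtZero (fun x => f x * g x) (φ * ψ) := by
  filter_upwards [hf, hg] with x hx hy
  have hx' := hx.summable.norm
  have hy' := hy.summable.norm
  have hprod := (summable_norm_sum_mul_antidiagonal_of_summable_norm hx' hy').of_norm.hasSum
  rw [← tsum_mul_tsum_eq_tsum_sum_antidiagonal_of_summable_norm hx' hy', hx.tsum_eq,
    hy.tsum_eq] at hprod
  refine hprod.congr_fun fun q => ?_
  rw [coeff_mul, Finset.sum_mul]
  refine Finset.sum_congr rfl fun ij hij => ?_
  rw [← HasAntidiagonal.mem_antidiagonal.1 hij]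
  ring

lemma prod {ι : Type*} (s : Finset ι) {f : ι → ℝ → ℝ} {φ : ι → ℝ⟦X⟧}
    (h : ∀ i ∈ s, HasPowerSeriesAtZero (f i) (φ i)) :
    HasPowerSeriesAtZero (fun x => ∏ i ∈ s, f i x) (∏ i ∈ s, φ i) := by
  classical
  induction s using Finset.induction_on with
  | empty => simpa only [Finset.prod_empty] using one
  | insert i s hi ih =>
    simp only [Finset.prod_insert hi]
    exact (h i (Finset.mem_insert_self i s)).mul
      (ih fun j hj => h j (Finset.mem_insert_of_mem hj))

lemma X_pow_mul (d : ℕ) (hf : HasPowerSeriesAtZero f φ) :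
    HasPowerSeriesAtZero (fun x => x ^ d * f x) (X ^ d * φ) := by
  filter_upwards [hf] with x hx
  rw [← (add_left_injective d).hasSum_iff fun q hq => ?_]
  · refine (hx.mul_left (x ^ d)).congr_fun fun q => ?_
    rw [Function.comp_apply, coeff_X_pow_mul, pow_add]
    ring
  · rw [coeff_X_pow_mul', if_neg fun hdq => hq ⟨q - d, Nat.sub_add_cancel hdq⟩, zero_mul]

lemma comp_const_mul (b : ℝ) (hf : HasPowerSeriesAtZero f φ) :
    HasPowerSeriesAtZero (fun x => f (b * x)) (rescale b φ) := by
  have hb : Tendsto (fun x : ℝ => b * x) (𝓝 0) (𝓝 0) := by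
    simpa only [mul_zero] using (continuous_const_mul b).tendsto 0
  filter_upwards [hb.eventually hf] with x hx
  simpa only [coeff_rescale, mul_pow, mul_assoc, mul_left_comm] using hx

lemma isBigO_sub_sum (hf : HasPowerSeriesAtZero f φ) (M : ℕ) :
    (fun x => f x - ∑ q ∈ range M, coeff q φ * x ^ q) =O[𝓝 0] (· ^ M) := by
  have hseries : HasFPowerSeriesAt f
      (FormalMultilinearSeries.ofScalars ℝ fun q => coeff q φ) 0 := by
    rw [hasFPowerSeriesAt_iff]
    filter_upwards [hf] with x hx
    simpa only [FormalMultilinearSeries.coeff_ofScalars, smul_eq_mul, zero_add, mul_comm] using hx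
  refine .of_norm_right <| (hseries.isBigO_sub_partialSum_pow M).congr (fun x => ?_) fun x => ?_
  · simp only [zero_add, FormalMultilinearSeries.partialSum,
      FormalMultilinearSeries.ofScalars_apply_eq, smul_eq_mul]
  · rw [norm_pow]

end HasPowerSeriesAtZero

end PowerSeries

section Exp

open Filter Topology Asymptotics PowerSeries

/-- The power series of `x ↦ exp (a * x ^ d)`, for `0 < d`. -/
noncomputable def expMonomialSeries (a : ℝ) (d : ℕ) : ℝ⟦X⟧ :=
  mk fun q => if d ∣ q then a ^ (q / d) / (q / d).factorial else 0

lemma hasPowerSeriesAtZero_exp_mul_pow (a : ℝ) {d : ℕ} (hd : 0 < d) :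
    HasPowerSeriesAtZero (fun x => Real.exp (a * x ^ d)) (expMonomialSeries a d) :=
  .of_forall fun x => by
    rw [← (mul_right_injective₀ hd.ne').hasSum_iff fun q hq => ?_]
    · have hexp := NormedSpace.expSeries_div_hasSum_exp (a * x ^ d)
      rw [← congrFun Real.exp_eq_exp_ℝ] at hexp
      refine hexp.congr_fun fun i => ?_
      simp only [Function.comp_apply, expMonomialSeries, coeff_mk, dvd_mul_right, if_true,
        Nat.mul_div_cancel_left i hd, mul_pow, pow_mul]
      ring
    · rw [expMonomialSeries, coeff_mk, if_neg fun ⟨i, hi⟩ => hq ⟨i, hi.symm⟩, zero_mul]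

lemma coeff_prod_congr {R ι : Type*} [CommSemiring R] {s : Finset ι} {φ ψ : ι → R⟦X⟧} {n : ℕ}
    (h : ∀ r ∈ s, ∀ i ≤ n, coeff i (φ r) = coeff i (ψ r)) :
    coeff n (∏ r ∈ s, φ r) = coeff n (∏ r ∈ s, ψ r) := by
  classical
  simp only [coeff_prod]
  refine Finset.sum_congr rfl fun l hl => Finset.prod_congr rfl fun r hr => h r hr _ ?_
  rw [← (mem_finsuppAntidiag.1 hl).1]
  exact single_le_sum_of_canonicallyOrdered hr

lemma coeff_expMonomialSeries_eq_one (a : ℝ) {d i : ℕ} (h : i < d) :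
    coeff i (expMonomialSeries a d) = coeff i 1 := by
  rw [expMonomialSeries, coeff_mk, coeff_one]
  rcases i.eq_zero_or_pos with rfl | hi
  · simp
  · rw [if_neg (Nat.not_dvd_of_pos_of_lt hi h), if_neg hi.ne']

lemma coeff_expMonomialSeries_eq_sum (a : ℝ) {d i n : ℕ} (hd : 0 < d) (h : i ≤ n) :
    coeff i (expMonomialSeries a d) =
      coeff i (∑ k : Fin (n + 1), monomial (d * k) (a ^ (k : ℕ) / (k : ℕ).factorial)) := by
  simp only [expMonomialSeries, coeff_mk, map_sum, coeff_monomial]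
  split_ifs with hdvd
  · obtain ⟨k, rfl⟩ := hdvd
    have hk : k < n + 1 := Nat.lt_succ_of_le ((Nat.le_mul_of_pos_left k hd).trans h)
    rw [Finset.sum_eq_single ⟨k, hk⟩ (fun b _ hb => if_neg fun heq => hb ?_) (by simp)]
    · rw [if_pos rfl, Nat.mul_div_cancel_left k hd]
    · exact Fin.ext (Nat.eq_of_mul_eq_mul_left hd heq).symm
  · rw [Finset.sum_eq_zero fun k _ => if_neg fun heq => hdvd ⟨_, heq⟩]

/-- The coefficient of `x ^ j` in the formal series `exp (∑ r, A r * x ^ (r + 1))`. -/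
noncomputable def expCoeff (A : ℕ → ℝ) (j : ℕ) : ℝ :=
  ∑ i ∈ Finset.univ.filter
      (fun i : Fin j → Fin (j + 1) => ∑ r : Fin j, (r.1 + 1) * (i r).1 = j),
    ∏ r : Fin j, A r ^ (i r).1 / (i r).1.factorial

lemma coeff_prod_expMonomialSeries (A : ℕ → ℝ) {j N : ℕ} (hjN : j ≤ N) :
    coeff j (∏ r ∈ range N, expMonomialSeries (A r) (r + 1)) = expCoeff A j := by
  have htrunc : ∀ r ∈ range N, ∀ i ≤ j, coeff i (expMonomialSeries (A r) (r + 1)) =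
      coeff i (if r < j then
        ∑ k : Fin (j + 1), monomial ((r + 1) * k) (A r ^ (k : ℕ) / (k : ℕ).factorial) else 1) := by
    intro r _ i hi
    split_ifs with hr
    · exact coeff_expMonomialSeries_eq_sum _ r.succ_pos hi
    · exact coeff_expMonomialSeries_eq_one _ (by omega)
  have hrange : (range N).filter (· < j) = range j := by
    ext r
    simp only [mem_filter, mem_range]
    omega
  rw [coeff_prod_congr htrunc, ← Finset.prod_filter, hrange, Finset.prod_range,
    Finset.prod_univ_sum, Fintype.piFinset_univ, map_sum, expCoeff, Finset.sum_filter]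
  refine Finset.sum_congr rfl fun i _ => ?_
  rw [prod_monomial, coeff_monomial]
  simp only [eq_comm]

lemma exp_sub_sum_expCoeff_isBigO {α : Type*} {l : Filter α} {A : ℕ → ℝ} {N : ℕ} {x y : α → ℝ}
    (hx : Tendsto x l (𝓝 0))
    (hy : (fun t => y t - ∑ r ∈ range N, A r * x t ^ (r + 1)) =O[l] fun t => x t ^ (N + 1)) :
    (fun t => Real.exp (y t) - ∑ j ∈ range (N + 1), expCoeff A j * x t ^ j)
      =O[l] fun t => x t ^ (N + 1) := by
  set P : ℝ → ℝ := fun x => ∑ r ∈ range N, A r * x ^ (r + 1) with hP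
  have hseries : HasPowerSeriesAtZero (fun x => Real.exp (P x))
      (∏ r ∈ range N, expMonomialSeries (A r) (r + 1)) := by
    simp only [hP, Real.exp_sum]
    exact .prod _ fun r _ => hasPowerSeriesAtZero_exp_mul_pow _ r.succ_pos
  have hpoly : (fun t => Real.exp (P (x t)) - ∑ j ∈ range (N + 1), expCoeff A j * x t ^ j)
      =O[l] fun t => x t ^ (N + 1) := by
    refine ((hseries.isBigO_sub_sum (N + 1)).comp_tendsto hx).congr_left fun t => ?_
    refine congrArg _ (Finset.sum_congr rfl fun j hj => ?_)
    rw [coeff_prod_expMonomialSeries A (mem_range_succ_iff.1 hj)]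
  have hzero : Tendsto (fun t => y t - P (x t)) l (𝓝 0) :=
    hy.trans_tendsto (by simpa using hx.pow (N + 1))
  have herr : (fun t => Real.exp (P (x t)) * (Real.exp (y t - P (x t)) - 1))
      =O[l] fun t => x t ^ (N + 1) := by
    have hbdd : (fun t => Real.exp (P (x t))) =O[l] fun _ => (1 : ℝ) :=
      (((by fun_prop : Continuous fun x => Real.exp (P x)).tendsto 0).comp hx).isBigO_one ℝ
    have hexp : (fun t => Real.exp (y t - P (x t)) - 1) =O[l] fun t => y t - P (x t) := by
      simpa [Function.comp_def] using (Real.hasDerivAt_exp 0).isBigO_sub.comp_tendsto hzero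
    simpa only [one_mul] using hbdd.mul (hexp.trans hy)
  refine (hpoly.add herr).congr_left fun t => ?_
  rw [mul_sub, ← Real.exp_add, add_sub_cancel]
  ring

end Exp

section Bernoulli

lemma sum_range_two_mul {R : Type*} [AddCommMonoid R] (f : ℕ → R) (M : ℕ) :
    ∑ j ∈ range (2 * M), f j = ∑ i ∈ range M, (f (2 * i) + f (2 * i + 1)) := by
  induction M with
  | zero => rfl
  | succ M ih => rw [mul_add_one, sum_range_succ, sum_range_succ, ih, sum_range_succ, add_assoc]

lemma sum_sub_one_mul_choose_mul_bernoulli {n : ℕ} (hn : 0 < n) :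
    ∑ j ∈ range (n + 2), ((j : ℚ) - 1) * ((n + 2).choose j * bernoulli j) =
      -((n + 2) * bernoulli (n + 1)) := by
  have hsplit : ∀ j ∈ range (n + 2), ((j : ℚ) - 1) * ((n + 2).choose j * bernoulli j) =
      (n + 1) * ((n + 2).choose j * bernoulli j)
        - (n + 2) * ((n + 1).choose j * bernoulli j) := by
    intro j hj
    have hchoose := congrArg (Nat.cast (R := ℚ)) (Nat.choose_mul_succ_eq (n + 1) j)
    rw [Nat.cast_mul, Nat.cast_mul, Nat.cast_sub (mem_range.1 hj).le] at hchoose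
    push_cast at hchoose
    linear_combination (bernoulli j) * hchoose
  rw [sum_congr rfl hsplit, sum_sub_distrib, ← mul_sum, ← mul_sum, sum_bernoulli,
    sum_range_succ _ (n + 1), sum_bernoulli, if_neg (by omega), if_neg (by omega), Nat.choose_self]
  ring

lemma sum_even_sub_one_mul_choose_mul_bernoulli {M : ℕ} (hM : 0 < M) :
    ∑ i ∈ range (M + 1),
      (2 * (i : ℚ) - 1) * ((2 * M + 2).choose (2 * i) * bernoulli (2 * i)) = 0 := by
  have h := sum_sub_one_mul_choose_mul_bernoulli (n := 2 * M) (by omega)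
  rw [bernoulli_eq_zero_of_odd (odd_two_mul_add_one M) (by omega), mul_zero, neg_zero,
    ← mul_add_one, sum_range_two_mul] at h
  rw [← h]
  refine sum_congr rfl fun i _ => ?_
  have hodd : (((2 * i + 1 : ℕ) : ℚ) - 1) * bernoulli (2 * i + 1) = 0 := by
    rcases i.eq_zero_or_pos with rfl | hi
    · norm_num
    · rw [bernoulli_eq_zero_of_odd (odd_two_mul_add_one i) (by omega), mul_zero]
  rw [mul_left_comm _ _ (bernoulli (2 * i + 1)), hodd, mul_zero, add_zero]
  push_cast
  rfl

/-- The coefficient of `z ^ (-2 * k)` in the asymptotic expansion of the logarithm of the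
Barnes `G`-function. -/
noncomputable def barnesCoef (k : ℕ) : ℝ :=
  bernoulli (2 * k + 2) / (4 * k * (k + 1))

lemma barnesCoef_succ_mul_choose (M k : ℕ) :
    barnesCoef (k + 1) * (2 * M + 1).choose (2 * k + 1) =
      (2 * ((k : ℝ) + 1 + 1) - 1) *
        ((2 * M + 4).choose (2 * (k + 1 + 1)) * bernoulli (2 * (k + 1 + 1)))
        / ((2 * M + 2) * (2 * M + 3) * (2 * M + 4)) := by
  have h₁ := congrArg (Nat.cast (R := ℝ)) (Nat.add_one_mul_choose_eq (2 * M + 1) (2 * k + 1))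
  have h₂ := congrArg (Nat.cast (R := ℝ)) (Nat.add_one_mul_choose_eq (2 * M + 2) (2 * k + 2))
  have h₃ := congrArg (Nat.cast (R := ℝ)) (Nat.add_one_mul_choose_eq (2 * M + 3) (2 * k + 3))
  have hchoose : ((2 * M + 1).choose (2 * k + 1) : ℝ) * ((2 * M + 2) * (2 * M + 3) * (2 * M + 4)) =
      (2 * M + 4).choose (2 * k + 4) * ((2 * k + 2) * (2 * k + 3) * (2 * k + 4)) := by
    push_cast at h₁ h₂ h₃
    linear_combination (2 * M + 3) * (2 * M + 4) * h₁ + (2 * M + 4) * (2 * k + 2) * h₂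
      + (2 * k + 2) * (2 * k + 3) * h₃
  rw [barnesCoef, eq_div_iff (by positivity), mul_assoc, hchoose,
    show 2 * (k + 1) + 2 = 2 * k + 4 by ring, show 2 * (k + 1 + 1) = 2 * k + 4 by ring]
  push_cast
  field_simp
  ring

lemma sum_barnesCoef_succ_mul_choose (M : ℕ) :
    ∑ k ∈ range M, barnesCoef (k + 1) * (2 * M + 1).choose (2 * k + 1) =
      1 / ((2 * M + 2) * (2 * M + 3) * (2 * M + 4)) - 1 / (24 * (M + 1)) := by
  have h := congrArg (Rat.cast (K := ℝ))
    (sum_even_sub_one_mul_choose_mul_bernoulli (M := M + 1) M.succ_pos)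
  rw [sum_range_succ', sum_range_succ'] at h
  push_cast at h
  rw [show 2 * (M + 1) + 2 = 2 * M + 4 by ring, bernoulli_two, bernoulli_zero,
    Nat.cast_choose_two, Nat.choose_zero_right] at h
  simp only [barnesCoef_succ_mul_choose, ← sum_div]
  push_cast at h
  field_simp at h ⊢
  linear_combination 2 * h

end Bernoulli

section BarnesApprox

open Filter Topology PowerSeries

/-- The asymptotic expansion of `log G(z + 1)`, with `G` the Barnes function, truncated after
`K` terms; its summands affine in `z` are left out, since only second differences matter. -/
noncomputable def barnesApprox (K : ℕ) (z : ℝ) : ℝ :=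
  z ^ 2 / 2 * Real.log z - 3 * z ^ 2 / 4 - Real.log z / 12
    + ∑ k ∈ Icc 1 K, barnesCoef k * (z⁻¹ ^ 2) ^ k

/-- The function with power series `∑ q ≥ 1, u ^ q / (q * (q + 1) * (q + 2))`; its value at
`u = 0` is `0 / 0 = 0`, as it should be. -/
noncomputable def barnesKernel (u : ℝ) : ℝ :=
  -((1 - u) ^ 2 * Real.log (1 - u) + u - 3 * u ^ 2 / 2) / (2 * u ^ 2)

/-- The increment of `barnesApprox K` from `z` to `z * (1 - u)`, up to elementary terms, as a
function of `s = (z * u) ^ 2`, `w = z⁻¹ ^ 2` and `u`. -/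
noncomputable def barnesIncrement (K : ℕ) (s w u : ℝ) : ℝ :=
  -(s * barnesKernel u) - Real.log (1 - u) / 12
    + ∑ k ∈ Icc 1 K, barnesCoef k * w ^ k * (1 / (1 - u) ^ (2 * k) - 1)

lemma barnesApprox_mul_one_sub (K : ℕ) {z u : ℝ} (hz : 0 < z) (hu : u < 1) :
    barnesApprox K (z * (1 - u)) = barnesApprox K z + z ^ 2 * (u ^ 2 / 2 - u) * Real.log z
      + z ^ 2 * u + barnesIncrement K ((z * u) ^ 2) (z⁻¹ ^ 2) u := by
  have hu' : 0 < 1 - u := sub_pos.2 hu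
  have hkernel : (1 - u) ^ 2 * Real.log (1 - u) =
      -(2 * u ^ 2 * barnesKernel u) - u + 3 * u ^ 2 / 2 := by
    rcases eq_or_ne u 0 with rfl | h
    · simp
    · rw [barnesKernel]; field_simp; ring
  have hsum : ∑ k ∈ Icc 1 K, barnesCoef k * ((z * (1 - u))⁻¹ ^ 2) ^ k =
      ∑ k ∈ Icc 1 K, barnesCoef k * (z⁻¹ ^ 2) ^ k
        + ∑ k ∈ Icc 1 K, barnesCoef k * (z⁻¹ ^ 2) ^ k * (1 / (1 - u) ^ (2 * k) - 1) := by
    rw [← sum_add_distrib]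
    refine sum_congr rfl fun k _ => ?_
    rw [mul_inv, mul_pow, mul_pow, pow_mul, one_div, inv_pow (1 - u), inv_pow ((1 - u) ^ 2)]
    ring
  rw [barnesApprox, barnesApprox, barnesIncrement, Real.log_mul hz.ne' hu'.ne', hsum]
  linear_combination z ^ 2 / 2 * hkernel

lemma barnesApprox_second_diff (K : ℕ) {z : ℝ} (hz : 1 < z) :
    barnesApprox K (z + 1) - 2 * barnesApprox K z + barnesApprox K (z - 1) - Real.log z =
      barnesIncrement K 1 (z⁻¹ ^ 2) z⁻¹ + barnesIncrement K 1 (z⁻¹ ^ 2) (-z⁻¹) := by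
  have hz0 : 0 < z := one_pos.trans hz
  have hinv : z⁻¹ < 1 := inv_lt_one_of_one_lt₀ hz
  have hmul : z * z⁻¹ = 1 := mul_inv_cancel₀ hz0.ne'
  have hadd := barnesApprox_mul_one_sub K hz0 ((neg_lt_zero.2 (inv_pos.2 hz0)).trans one_pos)
  have hsub := barnesApprox_mul_one_sub K hz0 hinv
  rw [mul_neg z, hmul, neg_one_sq, sub_neg_eq_add, mul_add, mul_one, hmul] at hadd
  rw [hmul, one_pow, mul_sub, mul_one, hmul] at hsub
  linear_combination hadd + hsub + (z * z⁻¹ + 1) * Real.log z * hmul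

/-- The power series of `barnesKernel`; the coefficient at `q = 0` is `1 / 0 = 0`. -/
noncomputable def barnesKernelSeries : ℝ⟦X⟧ :=
  mk fun q => 1 / (q * (q + 1) * (q + 2))

/-- The power series of `x ↦ -log (1 - x)`; the coefficient at `q = 0` is `1 / 0 = 0`. -/
noncomputable def negLogSeries : ℝ⟦X⟧ :=
  mk fun q => 1 / q

/-- The power series of `x ↦ 1 / (1 - x) ^ d - 1`, for `0 < d`. -/
noncomputable def invPowSubOneSeries (d : ℕ) : ℝ⟦X⟧ :=
  mk fun q => if q = 0 then 0 else (q + d - 1).choose (d - 1)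

lemma hasPowerSeriesAtZero_neg_log :
    HasPowerSeriesAtZero (fun x => -Real.log (1 - x)) negLogSeries := by
  filter_upwards [eventually_abs_sub_lt 0 one_pos] with x hx
  rw [sub_zero] at hx
  refine (hasSum_nat_add_iff' 1).1 ?_
  simp only [negLogSeries, coeff_mk, range_one, sum_singleton, Nat.cast_zero, div_zero, zero_mul,
    sub_zero]
  refine (Real.hasSum_pow_div_log_of_abs_lt_one hx).congr_fun fun q => ?_
  push_cast
  ring

lemma hasPowerSeriesAtZero_barnesKernel :
    HasPowerSeriesAtZero barnesKernel barnesKernelSeries := by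
  filter_upwards [eventually_abs_sub_lt 0 one_pos] with x hx
  rw [sub_zero] at hx
  rcases eq_or_ne x 0 with rfl | hx0
  · have hzero : barnesKernel 0 = 0 := by simp [barnesKernel]
    rw [hzero]
    refine HasSum.congr_fun hasSum_zero fun q => ?_
    rcases eq_or_ne q 0 with rfl | hq <;> simp [barnesKernelSeries, *]
  have hlog := Real.hasSum_pow_div_log_of_abs_lt_one hx
  have hlog₁ := (hasSum_nat_add_iff' 1).2 hlog
  have hlog₂ := (hasSum_nat_add_iff' 2).2 hlog
  have hcomb := ((hlog.mul_left (x ^ 2)).add (hlog₂.sub (hlog₁.mul_left (2 * x)))).div_const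
    (2 * x ^ 2)
  refine (hasSum_nat_add_iff' 1).1 ?_
  convert! hcomb using 1
  · ext q
    rw [barnesKernelSeries, coeff_mk]
    push_cast
    field_simp
    ring
  · simp only [barnesKernel, barnesKernelSeries, coeff_mk, sum_range_succ, range_zero, sum_empty,
      Nat.cast_zero, Nat.cast_one, zero_mul, div_zero]
    ring

lemma hasPowerSeriesAtZero_invPow_sub_one {d : ℕ} (hd : 0 < d) :
    HasPowerSeriesAtZero (fun x => 1 / (1 - x) ^ d - 1) (invPowSubOneSeries d) := by
  filter_upwards [eventually_abs_sub_lt 0 one_pos] with x hx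
  rw [sub_zero] at hx
  obtain ⟨d, rfl⟩ : ∃ e, d = e + 1 := ⟨d - 1, by omega⟩
  have hgeom := (hasSum_choose_mul_geometric_of_norm_lt_one d (r := x) hx).sub
    (hasSum_ite_eq 0 (1 : ℝ))
  refine hgeom.congr_fun fun q => ?_
  rw [invPowSubOneSeries, coeff_mk, ← add_assoc, Nat.add_sub_cancel, Nat.add_sub_cancel]
  split_ifs with hq
  · simp [hq]
  · rw [sub_zero]

/-- The power series of `x ↦ barnesIncrement K (σ * x ^ i) (γ * x ^ j) (β * x)`. -/
noncomputable def barnesIncrementSeries (K : ℕ) (σ γ β : ℝ) (i j : ℕ) : ℝ⟦X⟧ :=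
  C 12⁻¹ * rescale β negLogSeries - C σ * (X ^ i * rescale β barnesKernelSeries)
    + ∑ k ∈ Icc 1 K,
        C (barnesCoef k * γ ^ k) * (X ^ (j * k) * rescale β (invPowSubOneSeries (2 * k)))

lemma hasPowerSeriesAtZero_barnesIncrement (K : ℕ) (σ γ β : ℝ) (i j : ℕ) :
    HasPowerSeriesAtZero (fun x => barnesIncrement K (σ * x ^ i) (γ * x ^ j) (β * x))
      (barnesIncrementSeries K σ γ β i j) := by
  have hlog := (hasPowerSeriesAtZero_neg_log.comp_const_mul β).const_mul 12⁻¹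
  have hkernel := ((hasPowerSeriesAtZero_barnesKernel.comp_const_mul β).X_pow_mul i).const_mul σ
  have hpow := HasPowerSeriesAtZero.sum (Icc 1 K) fun k hk =>
    (((hasPowerSeriesAtZero_invPow_sub_one (d := 2 * k)
      (mul_pos two_pos (mem_Icc.1 hk).1)).comp_const_mul β).X_pow_mul (j * k)).const_mul
        (barnesCoef k * γ ^ k)
  refine ((hlog.sub hkernel).add hpow).congr (.of_forall fun x => ?_)
  have hsum : ∀ k, barnesCoef k * γ ^ k * (x ^ (j * k) * (1 / (1 - β * x) ^ (2 * k) - 1)) =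
      barnesCoef k * (γ * x ^ j) ^ k * (1 / (1 - β * x) ^ (2 * k) - 1) := fun k => by
    rw [mul_pow, pow_mul]; ring
  simp only [hsum, barnesIncrement]
  ring

lemma coeff_barnesIncrementSeries (K : ℕ) (σ γ β : ℝ) (i j q : ℕ) :
    coeff q (barnesIncrementSeries K σ γ β i j) = β ^ q / (12 * q)
      - σ * (if i ≤ q then β ^ (q - i) * coeff (q - i) barnesKernelSeries else 0)
      + ∑ k ∈ Icc 1 K, barnesCoef k * γ ^ k *
          if j * k ≤ q then β ^ (q - j * k) * coeff (q - j * k) (invPowSubOneSeries (2 * k))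
          else 0 := by
  simp only [barnesIncrementSeries, map_add, map_sub, map_sum, coeff_C_mul, coeff_X_pow_mul',
    coeff_rescale, negLogSeries, coeff_mk]
  ring

lemma coeff_zero_barnesIncrementSeries (K : ℕ) (σ γ β : ℝ) (i j : ℕ) :
    coeff 0 (barnesIncrementSeries K σ γ β i j) = 0 := by
  simp [coeff_barnesIncrementSeries, barnesKernelSeries, invPowSubOneSeries]

lemma barnesApprox_add_tendsto (K : ℕ) (a : ℝ) :
    Tendsto (fun z => barnesApprox K (z + a) - barnesApprox K z
      - ((a ^ 2 / 2 + z * a) * Real.log z - z * a)) atTop (𝓝 0) := by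
  have hseries := (hasPowerSeriesAtZero_barnesIncrement K (a ^ 2) 1 (-a) 0 2).isBigO_sub_sum 1
  have hlim := (hseries.trans_tendsto (by simpa using (tendsto_id (x := 𝓝 (0 : ℝ))).pow 1)).comp
    tendsto_inv_atTop_zero
  refine hlim.congr' ?_
  filter_upwards [eventually_gt_atTop 0, eventually_gt_atTop (-a)] with z hz hza
  have hu : -a * z⁻¹ < 1 := by rwa [← div_eq_mul_inv, div_lt_one hz]
  have hincr := barnesApprox_mul_one_sub K hz hu
  have hmul : z * z⁻¹ = 1 := mul_inv_cancel₀ hz.ne'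
  rw [show z * (1 - -a * z⁻¹) = z + a by linear_combination a * hmul,
    show z * (-a * z⁻¹) = -a by linear_combination -a * hmul, neg_sq] at hincr
  simp only [Function.comp_apply, range_one, sum_singleton, coeff_zero_barnesIncrementSeries,
    sub_zero, pow_zero, mul_one, one_mul]
  rw [hincr]
  linear_combination (a * z - z * a * Real.log z - (z * z⁻¹ + 1) * a ^ 2 / 2 * Real.log z) * hmul

end BarnesApprox

section SecondDifference

open Filter Asymptotics PowerSeries

lemma coeff_barnesIncrementSeries_neg_one (K q : ℕ) :
    coeff q (barnesIncrementSeries K 1 1 (-1) 0 2) =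
      (-1) ^ q * coeff q (barnesIncrementSeries K 1 1 1 0 2) := by
  simp only [coeff_barnesIncrementSeries, mul_add, mul_sub, mul_sum, one_pow, zero_le, if_true,
    Nat.sub_zero, one_mul, mul_one]
  refine congrArg₂ _ (by ring) (sum_congr rfl fun k _ => ?_)
  split_ifs with hk
  · have hsign : (-1 : ℝ) ^ (q - 2 * k) = (-1) ^ q := by
      conv_rhs => rw [← Nat.sub_add_cancel hk, pow_add, pow_mul, neg_one_sq, one_pow, mul_one]
    rw [hsign, mul_left_comm]
  · rw [mul_zero, mul_zero]

lemma coeff_barnesIncrementSeries_even {K L : ℕ} (hL : L ≤ K) :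
    coeff (2 * L) (barnesIncrementSeries K 1 1 1 0 2) = 0 := by
  rcases L with _ | M
  · exact coeff_zero_barnesIncrementSeries K 1 1 1 0 2
  simp only [coeff_barnesIncrementSeries, one_pow, zero_le, if_true, Nat.sub_zero, one_mul, mul_one]
  have hsub : Ico 1 (M + 1) ⊆ Icc 1 K := fun k hk => by rw [mem_Ico] at hk; rw [mem_Icc]; omega
  rw [← sum_subset hsub fun k hk hk' => ?_, sum_Ico_eq_sum_range, Nat.add_sub_cancel]
  · have hterm : ∀ k ∈ range M, barnesCoef (1 + k) *
        (if 2 * (1 + k) ≤ 2 * (M + 1) then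
          coeff (2 * (M + 1) - 2 * (1 + k)) (invPowSubOneSeries (2 * (1 + k))) else 0) =
        barnesCoef (k + 1) * (2 * M + 1).choose (2 * k + 1) := fun k hk => by
      have hk := mem_range.1 hk
      rw [if_pos (by omega), invPowSubOneSeries, coeff_mk, if_neg (by omega), add_comm 1 k,
        show 2 * (M + 1) - 2 * (k + 1) + 2 * (k + 1) - 1 = 2 * M + 1 by omega,
        show 2 * (k + 1) - 1 = 2 * k + 1 by omega]
    rw [sum_congr rfl hterm, sum_barnesCoef_succ_mul_choose, barnesKernelSeries, coeff_mk]
    push_cast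
    field_simp
    ring
  · rw [mem_Icc] at hk
    rw [mem_Ico] at hk'
    rcases eq_or_ne k (M + 1) with rfl | hne
    · simp [invPowSubOneSeries]
    · rw [if_neg (by omega), mul_zero]

lemma barnesApprox_second_diff_isBigO (K : ℕ) :
    (fun z => barnesApprox K (z + 1) - 2 * barnesApprox K z + barnesApprox K (z - 1) - Real.log z)
      =O[atTop] fun z => z⁻¹ ^ (2 * K + 2) := by
  have hseries := (hasPowerSeriesAtZero_barnesIncrement K 1 1 1 0 2).add
    (hasPowerSeriesAtZero_barnesIncrement K 1 1 (-1) 0 2)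
  have hcoeff : ∀ q ∈ range (2 * K + 2), coeff q (barnesIncrementSeries K 1 1 1 0 2
      + barnesIncrementSeries K 1 1 (-1) 0 2) = 0 := fun q hq => by
    rw [map_add, coeff_barnesIncrementSeries_neg_one]
    obtain ⟨L, rfl | rfl⟩ := q.even_or_odd'
    · rw [coeff_barnesIncrementSeries_even (by have := mem_range.1 hq; omega), mul_zero, add_zero]
    · rw [pow_succ, pow_mul, neg_one_sq, one_pow]
      ring
  refine ((hseries.isBigO_sub_sum (2 * K + 2)).comp_tendsto tendsto_inv_atTop_zero).congr'
    ?_ .rfl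
  filter_upwards [eventually_gt_atTop 1] with z hz
  rw [barnesApprox_second_diff K hz, Function.comp_apply,
    sum_eq_zero fun q hq => by rw [hcoeff q hq, zero_mul]]
  simp only [pow_zero, one_mul, mul_one, neg_one_mul, sub_zero]

end SecondDifference

section LogGamma

open Filter Topology Asymptotics

lemma log_Gamma_add_one {z : ℝ} (hz : 0 < z) :
    Real.log (Real.Gamma (z + 1)) = Real.log z + Real.log (Real.Gamma z) := by
  rw [Real.Gamma_add_one hz.ne', Real.log_mul hz.ne' (Real.Gamma_pos_of_pos hz).ne']

lemma log_Gamma_add_le {z h : ℝ} (hz : 0 < z) (h0 : 0 ≤ h) (h1 : h ≤ 1) :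
    Real.log (Real.Gamma (z + h)) ≤ Real.log (Real.Gamma z) + h * Real.log z := by
  have hconv := Real.convexOn_log_Gamma.2 (Set.mem_Ioi.2 hz)
    (Set.mem_Ioi.2 (add_pos hz one_pos)) (sub_nonneg.2 h1) h0 (sub_add_cancel 1 h)
  simp only [smul_eq_mul, Function.comp_apply, log_Gamma_add_one hz] at hconv
  rw [show (1 - h) * z + h * (z + 1) = z + h by ring] at hconv
  linarith

lemma le_log_Gamma_add {z h : ℝ} (hz : 1 < z) (h0 : 0 ≤ h) :
    Real.log (Real.Gamma z) + h * Real.log (z - 1) ≤ Real.log (Real.Gamma (z + h)) := by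
  have hz1 : 0 < z - 1 := sub_pos.2 hz
  have hh : 0 < 1 + h := by linarith
  have hconv := Real.convexOn_log_Gamma.2 (Set.mem_Ioi.2 hz1)
    (Set.mem_Ioi.2 (by linarith : 0 < z + h)) (div_nonneg h0 hh.le) (one_div_pos.2 hh).le
    (by rw [← add_div, add_comm h, div_self hh.ne'])
  have hrec := log_Gamma_add_one hz1
  rw [sub_add_cancel] at hrec
  simp only [smul_eq_mul, Function.comp_apply] at hconv
  rw [show h / (1 + h) * (z - 1) + 1 / (1 + h) * (z + h) = z by
    rw [div_mul_eq_mul_div, div_mul_eq_mul_div, ← add_div, div_eq_iff hh.ne']; ring] at hconv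
  field_simp at hconv
  linear_combination hconv - h * hrec

lemma log_Gamma_add_tendsto {h : ℝ} (h0 : 0 ≤ h) (h1 : h ≤ 1) :
    Tendsto (fun z => Real.log (Real.Gamma (z + h)) - Real.log (Real.Gamma z) - h * Real.log z)
      atTop (𝓝 0) := by
  have hlower := (Real.tendsto_log_comp_add_sub_log (-1)).const_mul h
  rw [mul_zero] at hlower
  refine tendsto_of_tendsto_of_tendsto_of_le_of_le' hlower tendsto_const_nhds ?_ ?_
  · filter_upwards [eventually_gt_atTop 1] with z hz
    rw [← sub_eq_add_neg]
    linarith [le_log_Gamma_add hz h0]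
  · filter_upwards [eventually_gt_atTop 0] with z hz
    linarith [log_Gamma_add_le hz h0 h1]

/-- The error in approximating `log Γ(z) = log G(z + 1) - log G(z)` through `barnesApprox`. -/
noncomputable def logGammaRemainder (K : ℕ) (z : ℝ) : ℝ :=
  Real.log (Real.Gamma z) - (barnesApprox K z - barnesApprox K (z - 1))

lemma logGammaRemainder_add_one_sub_isBigO (K : ℕ) :
    (fun z => logGammaRemainder K (z + 1) - logGammaRemainder K z)
      =O[atTop] fun z => z⁻¹ ^ (2 * K + 2) := by
  refine (barnesApprox_second_diff_isBigO K).neg_left.congr' ?_ .rfl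
  filter_upwards [eventually_gt_atTop 0] with z hz
  rw [logGammaRemainder, logGammaRemainder, log_Gamma_add_one hz, add_sub_cancel_right]
  ring

lemma logGammaRemainder_add_sub_tendsto (K : ℕ) {h : ℝ} (h0 : 0 ≤ h) (h1 : h ≤ 1) :
    Tendsto (fun z => logGammaRemainder K (z + h) - logGammaRemainder K z) atTop (𝓝 0) := by
  have hlim := (((log_Gamma_add_tendsto h0 h1).sub (barnesApprox_add_tendsto K h)).add
    (barnesApprox_add_tendsto K (h - 1))).sub (barnesApprox_add_tendsto K (-1))
  simp only [sub_zero, add_zero] at hlim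
  refine hlim.congr fun z => ?_
  rw [logGammaRemainder, logGammaRemainder, add_sub_assoc z h 1, sub_eq_add_neg z 1]
  ring

lemma abs_le_of_abs_add_one_sub_le {d : ℝ → ℝ} (hd : Tendsto d atTop (𝓝 0)) {B y : ℝ} {k : ℕ}
    (hB : 0 ≤ B) (hy : 1 ≤ y) (h : ∀ z ≥ y, |d (z + 1) - d z| ≤ B * z⁻¹ ^ (k + 2)) :
    |d y| ≤ B * (∑' j : ℕ, ((j : ℝ) + 1)⁻¹ ^ 2) * y⁻¹ ^ k := by
  have hy0 : 0 < y := by linarith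
  have hsummable : Summable fun j : ℕ => ((j : ℝ) + 1)⁻¹ ^ 2 := by
    simpa using (summable_nat_add_iff 1).2 (Real.summable_nat_pow_inv.2 one_lt_two)
  have hstep (j : ℕ) : dist (d (y + j)) (d (y + j.succ)) ≤
      B * y⁻¹ ^ k * ((j : ℝ) + 1)⁻¹ ^ 2 := by
    rw [dist_comm, Real.dist_eq, Nat.cast_succ, ← add_assoc]
    have hyj : (y + j)⁻¹ ≤ y⁻¹ := inv_anti₀ hy0 (by simp)
    have hj : (y + j)⁻¹ ≤ ((j : ℝ) + 1)⁻¹ := inv_anti₀ (by positivity) (by linarith)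
    refine (h _ (by simp)).trans ?_
    rw [pow_add, ← mul_assoc]
    gcongr
  have htendsto : Tendsto (fun j : ℕ => d (y + j)) atTop (𝓝 0) :=
    hd.comp (tendsto_atTop_add_const_left _ y tendsto_natCast_atTop_atTop)
  have := dist_le_tsum_of_dist_le_of_tendsto₀ _ hstep (hsummable.mul_left _) htendsto
  rw [Real.dist_0_eq_abs, Nat.cast_zero, add_zero, tsum_mul_left] at this
  linarith

lemma exists_abs_logGammaRemainder_add_sub_le (K : ℕ) :
    ∃ B ≥ 0, ∀ᶠ y in atTop, ∀ h ∈ Set.Icc (0 : ℝ) 1,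
      |logGammaRemainder K (y + h) - logGammaRemainder K y| ≤ B * y⁻¹ ^ (2 * K) := by
  obtain ⟨B, hB, hbound⟩ := (logGammaRemainder_add_one_sub_isBigO K).exists_nonneg
  obtain ⟨Y, hY⟩ := eventually_atTop.1 hbound.bound
  refine ⟨(B + B) * ∑' j : ℕ, ((j : ℝ) + 1)⁻¹ ^ 2, by positivity, ?_⟩
  filter_upwards [eventually_ge_atTop Y, eventually_ge_atTop 1] with y hyY hy1 h hh
  have hstep : ∀ z ≥ y, |logGammaRemainder K (z + 1) - logGammaRemainder K z| ≤
      B * z⁻¹ ^ (2 * K + 2) := fun z hz => by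
    simpa [abs_of_pos (one_pos.trans_le (hy1.trans hz))] using hY z (hyY.trans hz)
  refine abs_le_of_abs_add_one_sub_le (logGammaRemainder_add_sub_tendsto K hh.1 hh.2)
    (add_nonneg hB hB) hy1 fun z hz => ?_
  have hz0 : 0 < z := one_pos.trans_le (hy1.trans hz)
  have hshift : B * (z + h)⁻¹ ^ (2 * K + 2) ≤ B * z⁻¹ ^ (2 * K + 2) := by
    have : (z + h)⁻¹ ≤ z⁻¹ := inv_anti₀ hz0 (by linarith [hh.1])
    have := inv_nonneg.2 (add_nonneg hz0.le hh.1)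
    gcongr
  calc |logGammaRemainder K (z + 1 + h) - logGammaRemainder K (z + 1)
        - (logGammaRemainder K (z + h) - logGammaRemainder K z)|
      = |(logGammaRemainder K (z + h + 1) - logGammaRemainder K (z + h))
          - (logGammaRemainder K (z + 1) - logGammaRemainder K z)| := by
        rw [add_right_comm]; exact congrArg abs (by ring)
    _ ≤ B * (z + h)⁻¹ ^ (2 * K + 2) + B * z⁻¹ ^ (2 * K + 2) :=
        (abs_sub _ _).trans (add_le_add (hstep _ (by linarith [hh.1])) (hstep z hz))
    _ ≤ (B + B) * z⁻¹ ^ (2 * K + 2) := by linarith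

end LogGamma

section LogMoment

lemma log_Gamma_sub_log_Gamma_sub_natCast {x : ℝ} {p : ℕ} (hx : p < x) :
    Real.log (Real.Gamma x) - Real.log (Real.Gamma (x - p)) =
      ∑ j ∈ Icc 1 p, Real.log (x - j) := by
  induction p with
  | zero => simp
  | succ p ih =>
    push_cast at hx ⊢
    rw [sum_Icc_succ_top (by omega), ← ih (by linarith)]
    have hrec := log_Gamma_add_one (z := x - (p + 1)) (by linarith)
    rw [sub_add_eq_sub_sub, sub_add_cancel] at hrec
    push_cast
    rw [sub_add_eq_sub_sub]
    linarith

lemma sum_log_Gamma_add_natCast (K : ℕ) (x : ℝ) (n : ℕ) :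
    ∑ i ∈ range n, Real.log (Real.Gamma (x + i)) =
      barnesApprox K (x - 1 + n) - barnesApprox K (x - 1)
        + ∑ i ∈ range n, logGammaRemainder K (x + i) := by
  have htele := sum_range_sub (fun i : ℕ => barnesApprox K (x - 1 + i)) n
  rw [Nat.cast_zero, add_zero] at htele
  rw [← htele, ← sum_add_distrib]
  refine sum_congr rfl fun i _ => ?_
  rw [logGammaRemainder, Nat.cast_succ, add_comm (i : ℝ), ← add_assoc, sub_add_cancel,
    add_sub_right_comm, add_sub_cancel]

/-- The approximation of `log (mu0 p n m)` obtained by telescoping the sum of the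
`log Γ(m - n + 1 - p / n + i) - log Γ(m - n + 1 + i)` through `barnesApprox K`. -/
noncomputable def logMu0Approx (K p n m : ℕ) : ℝ :=
  ∑ j ∈ Icc 1 p, Real.log ((m : ℝ) * n - j) - p * Real.log n
    + (barnesApprox K (m - p / n) - barnesApprox K m)
    - (barnesApprox K (m - n - p / n) - barnesApprox K (m - n))

variable {p n m : ℕ}

lemma lt_mul_sub_add_one (hn : 0 < n) (hpn : p ≤ n) (hnm : n < m) : p < n * (m - n + 1) :=
  hpn.trans_lt (lt_mul_of_one_lt_right hn (by omega))

lemma mu0_arguments_pos (hnm : n ≤ m) (h : p < n * (m - n + 1)) :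
    0 < (n : ℝ) ∧ 0 < (m : ℝ) * n - p ∧ 0 < (m : ℝ) - n + 1 - p / n := by
  have hn : 0 < n := Nat.pos_of_mul_pos_right (p.zero_le.trans_lt h)
  have hle : n * (m - n + 1) ≤ m * n := by
    rw [mul_comm m]
    exact Nat.mul_le_mul_left n (by omega)
  refine ⟨mod_cast hn, sub_pos.2 (mod_cast h.trans_le hle), ?_⟩
  rw [sub_pos, div_lt_iff₀' (mod_cast hn), ← Nat.cast_sub hnm]
  exact_mod_cast h

lemma mu0_eq_exp (hnm : n ≤ m) (h : p < n * (m - n + 1)) : mu0 p n m =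
    Real.exp (∑ j ∈ Icc 1 p, Real.log ((m : ℝ) * n - j) - p * Real.log n
      + ∑ i ∈ range n, (Real.log (Real.Gamma (m - n + 1 - p / n + i))
        - Real.log (Real.Gamma (m - n + 1 + i)))) := by
  obtain ⟨hn, hmn, hx⟩ := mu0_arguments_pos hnm h
  have hexp {x : ℝ} (hx : 0 < x) : Real.exp (Real.log (Real.Gamma x)) = Real.Gamma x :=
    Real.exp_log (Real.Gamma_pos_of_pos hx)
  have hdiv : (0 : ℝ) ≤ p / n := by positivity
  rw [mu0, ← log_Gamma_sub_log_Gamma_sub_natCast (sub_pos.1 hmn), Real.exp_add, Real.exp_sub,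
    Real.exp_sub, Real.exp_sum, Real.exp_nat_mul, Real.exp_log hn,
    hexp (p.cast_nonneg.trans_lt (sub_pos.1 hmn)), hexp hmn, div_div, mul_comm ((n : ℝ) ^ p)]
  congr 1
  refine prod_congr rfl fun i _ => ?_
  rw [Real.exp_sub, hexp (by positivity), hexp]
  have := i.cast_nonneg (α := ℝ)
  linarith

lemma mu0_pos (hnm : n ≤ m) (h : p < n * (m - n + 1)) : 0 < mu0 p n m := by
  rw [mu0_eq_exp hnm h]
  exact Real.exp_pos _

lemma log_mu0_sub_logMu0Approx (K : ℕ) (hnm : n ≤ m) (h : p < n * (m - n + 1)) :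
    Real.log (mu0 p n m) - logMu0Approx K p n m =
      ∑ i ∈ range n, (logGammaRemainder K (m - n + 1 - p / n + i)
        - logGammaRemainder K (m - n + 1 + i)) := by
  rw [mu0_eq_exp hnm h, Real.log_exp, sum_sub_distrib, sum_log_Gamma_add_natCast K,
    sum_log_Gamma_add_natCast K, logMu0Approx, sum_sub_distrib,
    show (m : ℝ) - n + 1 - p / n - 1 = m - n - p / n by ring, add_sub_cancel_right,
    show (m : ℝ) - n - p / n + n = m - p / n by ring, sub_add_cancel]
  ring

lemma abs_log_mu0_sub_logMu0Approx_le {K : ℕ} {B : ℝ} (hB : 0 ≤ B) (hn : 0 < n)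
    (hpn : p ≤ n) (hnm : n < m) (hbound : ∀ y ≥ (m : ℝ) - n, ∀ h ∈ Set.Icc (0 : ℝ) 1,
      |logGammaRemainder K (y + h) - logGammaRemainder K y| ≤ B * y⁻¹ ^ (2 * K)) :
    |Real.log (mu0 p n m) - logMu0Approx K p n m| ≤ n * (B * ((m : ℝ) - n)⁻¹ ^ (2 * K)) := by
  have hs : 0 < (m : ℝ) - n := sub_pos.2 (mod_cast hnm)
  have hfrac : (p : ℝ) / n ∈ Set.Icc (0 : ℝ) 1 :=
    ⟨by positivity, div_le_one_of_le₀ (mod_cast hpn) n.cast_nonneg⟩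
  rw [log_mu0_sub_logMu0Approx K hnm.le (lt_mul_sub_add_one hn hpn hnm)]
  refine (abs_sum_le_sum_abs _ _).trans ((sum_le_card_nsmul _ _
    (B * ((m : ℝ) - n)⁻¹ ^ (2 * K)) fun i _ => ?_).trans_eq ?_)
  · have hy : (m : ℝ) - n ≤ m - n + 1 - p / n + i := by
      linarith [hfrac.2, i.cast_nonneg (α := ℝ)]
    have hstep := hbound _ hy _ hfrac
    rw [add_right_comm, sub_add_cancel, abs_sub_comm] at hstep
    refine hstep.trans ?_
    have := hs.trans_le hy
    gcongr
  · rw [card_range, nsmul_eq_mul]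

end LogMoment

section LogMomentSeries

open PowerSeries

/-- The function whose value at `x = 1 / n ^ 2` is `logMu0Approx K p n m - Acoef p c 0`, for
`c = n / m`. -/
noncomputable def logMomentFun (K p : ℕ) (c x : ℝ) : ℝ :=
  ∑ j ∈ Icc 1 p, Real.log (1 - j * c * x)
    + barnesIncrement K (p ^ 2 * x) (c ^ 2 * x) (p * c * x)
    - barnesIncrement K (p ^ 2 * x) ((c / (1 - c)) ^ 2 * x) (p * (c / (1 - c)) * x)
    - p ^ 2 / 2 * Real.log (1 - c) * x

/-- The power series of `logMomentFun`. -/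
noncomputable def logMomentSeries (K p : ℕ) (c : ℝ) : ℝ⟦X⟧ :=
  ∑ j ∈ Icc 1 p, C (-1) * rescale (j * c) negLogSeries
    + barnesIncrementSeries K (p ^ 2) (c ^ 2) (p * c) 1 1
    - barnesIncrementSeries K (p ^ 2) ((c / (1 - c)) ^ 2) (p * (c / (1 - c))) 1 1
    - C (p ^ 2 / 2 * Real.log (1 - c)) * X

lemma hasPowerSeriesAtZero_logMomentFun (K p : ℕ) (c : ℝ) :
    HasPowerSeriesAtZero (logMomentFun K p c) (logMomentSeries K p c) := by
  have hlog := HasPowerSeriesAtZero.sum (Icc 1 p) fun j _ =>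
    (hasPowerSeriesAtZero_neg_log.comp_const_mul (j * c)).const_mul (-1)
  have hincr (g : ℝ) := hasPowerSeriesAtZero_barnesIncrement K (p ^ 2) (g ^ 2) (p * g) 1 1
  have h := ((hlog.add (hincr c)).sub (hincr (c / (1 - c)))).sub
    ((HasPowerSeriesAtZero.one.X_pow_mul 1).const_mul (p ^ 2 / 2 * Real.log (1 - c)))
  simp only [pow_one, mul_one, neg_one_mul, neg_neg] at h
  exact h

lemma coeff_logMomentSeries (K p q : ℕ) (c : ℝ) :
    coeff q (logMomentSeries K p c) = -(c ^ q / q * ∑ j ∈ Icc 1 p, (j : ℝ) ^ q)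
      + coeff q (barnesIncrementSeries K (p ^ 2) (c ^ 2) (p * c) 1 1)
      - coeff q (barnesIncrementSeries K (p ^ 2) ((c / (1 - c)) ^ 2) (p * (c / (1 - c))) 1 1)
      - if q = 1 then p ^ 2 / 2 * Real.log (1 - c) else 0 := by
  have hlog : ∑ j ∈ Icc 1 p, coeff q (C (-1) * rescale (j * c) negLogSeries) =
      -(c ^ q / q * ∑ j ∈ Icc 1 p, (j : ℝ) ^ q) := by
    rw [mul_sum, ← sum_neg_distrib]
    refine sum_congr rfl fun j _ => ?_
    rw [coeff_C_mul, coeff_rescale, negLogSeries, coeff_mk, mul_pow]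
    ring
  rw [logMomentSeries, map_sub, map_sub, map_add, map_sum, hlog, coeff_C_mul, coeff_X,
    mul_ite, mul_one, mul_zero]

lemma coeff_zero_logMomentSeries (K p : ℕ) (c : ℝ) : coeff 0 (logMomentSeries K p c) = 0 := by
  simp only [coeff_logMomentSeries, coeff_zero_barnesIncrementSeries, Nat.cast_zero, div_zero,
    zero_mul, zero_ne_one, if_false, neg_zero, add_zero, sub_zero]

lemma risingFactorial_div_factorial {a : ℕ} (ha : 0 < a) (r : ℕ) :
    risingFactorial a r / r.factorial = (r + a - 1).choose (a - 1) := by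
  have hasc : risingFactorial a r = (a.ascFactorial r : ℕ) := by
    rw [risingFactorial, Nat.ascFactorial_eq_prod_range]
    push_cast
    rfl
  obtain ⟨d, rfl⟩ : ∃ d, a = d + 1 := ⟨a - 1, by omega⟩
  rw [hasc, Nat.ascFactorial_eq_factorial_mul_choose, Nat.cast_mul,
    mul_div_cancel_left₀ _ (by positivity), Nat.add_sub_cancel, ← add_assoc, Nat.add_sub_cancel,
    add_comm d, Nat.choose_symm_add]

lemma coeff_one_barnesIncrementSeries (K : ℕ) (σ γ β : ℝ) :
    coeff 1 (barnesIncrementSeries K σ γ β 1 1) = β / 12 := by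
  rw [coeff_barnesIncrementSeries, sum_eq_zero fun k hk => ?_]
  · simp [barnesKernelSeries]
  · rcases (mem_Icc.1 hk).1.eq_or_lt with rfl | hk
    · simp [invPowSubOneSeries]
    · rw [if_neg (by omega), mul_zero]

lemma coeff_add_two_barnesIncrementSeries {K q : ℕ} (hq : q + 1 ≤ K) (σ γ β : ℝ) :
    coeff (q + 2) (barnesIncrementSeries K σ γ β 1 1) =
      β ^ (q + 2) / (12 * (q + 2)) - σ * β ^ (q + 1) / ((q + 1) * (q + 2) * (q + 3))
        + ∑ k ∈ Icc 1 (q + 1), barnesCoef k * γ ^ k * β ^ (q + 2 - k)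
          * (risingFactorial (2 * k) (q + 2 - k) / (q + 2 - k).factorial) := by
  rw [coeff_barnesIncrementSeries, ← sum_subset (Icc_subset_Icc_right hq) fun k hk hk' => ?_]
  · congr 1
    · rw [if_pos (by omega), show q + 2 - 1 = q + 1 by omega, barnesKernelSeries, coeff_mk]
      push_cast
      ring
    · refine sum_congr rfl fun k hk => ?_
      have hk := mem_Icc.1 hk
      rw [one_mul, if_pos (by omega), invPowSubOneSeries, coeff_mk, if_neg (by omega),
        risingFactorial_div_factorial (by omega), mul_assoc]
      ring
  · rw [mem_Icc] at hk hk'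
    rcases eq_or_ne k (q + 2) with rfl | hne
    · simp [invPowSubOneSeries]
    · rw [if_neg (by omega), mul_zero]

lemma coeff_one_logMomentSeries (K p : ℕ) {c : ℝ} (hc : c ≠ 1) :
    coeff 1 (logMomentSeries K p c) = Acoef p c 1 := by
  have hgauss : ∑ j ∈ Icc 1 p, (j : ℝ) = p * (p + 1) / 2 := by
    induction p with
    | zero => simp
    | succ p ih => rw [sum_Icc_succ_top (by omega), ih]; push_cast; ring
  have hc₁ : c - 1 ≠ 0 := sub_ne_zero.2 hc
  have hc₂ : 1 - c ≠ 0 := sub_ne_zero.2 hc.symm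
  simp only [coeff_logMomentSeries, coeff_one_barnesIncrementSeries, pow_one, hgauss, Acoef,
    Nat.cast_one, if_true]
  rw [show (c / (1 - c)) = -c / (c - 1) by rw [div_eq_div_iff hc₂ hc₁]; ring]
  field_simp
  ring

lemma bernoulli_summand_eq {p q k : ℕ} (hkq : k ≤ q) (c : ℝ) :
    (bernoulli (2 * k + 2) : ℝ) * c ^ (2 * k) * risingFactorial (2 * k) (q - k)
        * (p * c) ^ (q - k) / (4 * k * (k + 1) * (q - k).factorial)
        * (1 - (1 - c) ^ (-(k : ℤ) - q)) =
      barnesCoef k * (c ^ 2) ^ k * (p * c) ^ (q - k)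
          * (risingFactorial (2 * k) (q - k) / (q - k).factorial)
        - barnesCoef k * ((c / (1 - c)) ^ 2) ^ k * (p * (c / (1 - c))) ^ (q - k)
          * (risingFactorial (2 * k) (q - k) / (q - k).factorial) := by
  have hzpow : (1 - c) ^ (-(k : ℤ) - q) = ((1 - c) ^ (2 * k) * (1 - c) ^ (q - k))⁻¹ := by
    rw [← pow_add, ← zpow_natCast, ← zpow_neg]
    congr 1
    omega
  rw [hzpow, barnesCoef, ← div_div _ _ ((q - k).factorial : ℝ)]
  ring

lemma coeff_add_two_logMomentSeries {K p q : ℕ} {c : ℝ} (hc₀ : c ≠ 0) (hc₁ : c ≠ 1)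
    (hq : q + 1 ≤ K) :
    coeff (q + 2) (logMomentSeries K p c) = Acoef p c (q + 2) := by
  have hc' : 1 - c ≠ 0 := sub_ne_zero.2 hc₁.symm
  have hsum := sum_congr (rfl : Icc 1 (q + 1) = _) fun k hk =>
    bernoulli_summand_eq (p := p) (q := q + 2) ((mem_Icc.1 hk).2.trans (by omega)) c
  rw [sum_sub_distrib] at hsum
  push_cast at hsum
  rw [coeff_logMomentSeries, coeff_add_two_barnesIncrementSeries hq,
    coeff_add_two_barnesIncrementSeries hq, if_neg (by omega), Acoef]
  push_cast
  rw [hsum]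
  have hpow : (p * (c / (1 - c))) ^ (q + 2) = (c * p) ^ (q + 2) / (1 - c) ^ (q + 2) := by
    rw [← div_pow]
    ring
  have hkernel (g : ℝ) (hg : g ≠ 0) :
      (p : ℝ) ^ 2 * (p * g) ^ (q + 1) = p * (p * g) ^ (q + 2) / g := by
    rw [eq_div_iff hg]
    ring
  rw [hkernel c hc₀, hkernel _ (div_ne_zero hc₀ hc'), hpow, mul_comm (p : ℝ) c,
    show ((q : ℝ) + 2) ^ 2 - 1 = (q + 1) * (q + 3) by ring]
  field_simp
  ring

lemma coeff_succ_logMomentSeries {K p q : ℕ} {c : ℝ} (hc₀ : c ≠ 0) (hc₁ : c ≠ 1)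
    (hq : q ≤ K) :
    coeff (q + 1) (logMomentSeries K p c) = Acoef p c (q + 1) := by
  rcases q with _ | q
  · exact coeff_one_logMomentSeries K p hc₁
  · exact coeff_add_two_logMomentSeries hc₀ hc₁ hq

end LogMomentSeries

section Expansion

open Filter Topology Asymptotics PowerSeries

lemma barnesApprox_div_sub_div (K : ℕ) {p n g : ℝ} (hn : 0 < n) (hg : 0 < g)
    (hu : p * g * n⁻¹ ^ 2 < 1) :
    barnesApprox K (n / g - p / n) - barnesApprox K (n / g) =
      (p ^ 2 * n⁻¹ ^ 2 / 2 - p / g) * Real.log (n / g) + p / g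
        + barnesIncrement K (p ^ 2 * n⁻¹ ^ 2) (g ^ 2 * n⁻¹ ^ 2) (p * g * n⁻¹ ^ 2) := by
  have hincr := barnesApprox_mul_one_sub K (div_pos hn hg) hu
  rw [show n / g * (1 - p * g * n⁻¹ ^ 2) = n / g - p / n by field_simp,
    show (n / g * (p * g * n⁻¹ ^ 2)) ^ 2 = p ^ 2 * n⁻¹ ^ 2 by field_simp,
    show (n / g)⁻¹ ^ 2 = g ^ 2 * n⁻¹ ^ 2 by field_simp] at hincr
  rw [hincr]
  field_simp
  ring

lemma sum_log_sq_div_sub {p : ℕ} {n c : ℝ} (hn : 0 < n) (hc : 0 < c) (hu : p * c * n⁻¹ ^ 2 < 1) :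
    ∑ j ∈ Icc 1 p, Real.log (n / c * n - j) =
      p * (2 * Real.log n - Real.log c) + ∑ j ∈ Icc 1 p, Real.log (1 - j * c * n⁻¹ ^ 2) := by
  have hterm : ∀ j ∈ Icc 1 p, Real.log (n / c * n - j) =
      (2 * Real.log n - Real.log c) + Real.log (1 - j * c * n⁻¹ ^ 2) := fun j hj => by
    have hjp : (j : ℝ) ≤ p := mod_cast (mem_Icc.1 hj).2
    have hpos : 0 < 1 - j * c * n⁻¹ ^ 2 := sub_pos.2 (lt_of_le_of_lt (by gcongr) hu)
    rw [show n / c * n - j = n ^ 2 / c * (1 - j * c * n⁻¹ ^ 2) by field_simp,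
      Real.log_mul (by positivity) hpos.ne', Real.log_div (by positivity) hc.ne', Real.log_pow]
    push_cast
    rfl
  rw [sum_congr rfl hterm, sum_add_distrib, sum_const, Nat.card_Icc, Nat.add_sub_cancel,
    nsmul_eq_mul]

lemma logMu0Approx_eq (K : ℕ) {p n m : ℕ} {c : ℝ} (hn : 0 < n) (hm : (m : ℝ) = n / c)
    (hc₀ : 0 < c) (hc₁ : c < 1) (hu : p * (c / (1 - c)) * (n : ℝ)⁻¹ ^ 2 < 1) :
    logMu0Approx K p n m = Acoef p c 0 + logMomentFun K p c ((n : ℝ)⁻¹ ^ 2) := by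
  have hn' : (0 : ℝ) < n := mod_cast hn
  have hc' : 0 < 1 - c := sub_pos.2 hc₁
  have hcg : c ≤ c / (1 - c) := le_div_self hc₀.le hc' (by linarith)
  have huc : p * c * (n : ℝ)⁻¹ ^ 2 < 1 := lt_of_le_of_lt (by gcongr) hu
  have hmn : (n : ℝ) / c - n = n / (c / (1 - c)) := by field_simp
  have hdiv : p / (c / (1 - c)) = p / c - p := by field_simp
  rw [logMu0Approx, hm, hmn, barnesApprox_div_sub_div K hn' hc₀ huc,
    barnesApprox_div_sub_div K hn' (div_pos hc₀ hc') hu, sum_log_sq_div_sub hn' hc₀ huc,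
    Real.log_div hn'.ne' hc₀.ne', Real.log_div hn'.ne' (div_pos hc₀ hc').ne',
    Real.log_div hc₀.ne' hc'.ne', Acoef, logMomentFun, hdiv]
  ring

variable {ι : Type*} {l : Filter ι} {n m : ι → ℕ} {c : ℝ}

lemma log_mu0_sub_logMu0Approx_isBigO (K p : ℕ) (hn : Tendsto n l atTop)
    (hm : ∀ t, (m t : ℝ) = n t / c) (hc₀ : 0 < c) (hc₁ : c < 1) :
    (fun t => Real.log (mu0 p (n t) (m t)) - logMu0Approx (K + 1) p (n t) (m t))
      =O[l] fun t => ((n t : ℝ)⁻¹ ^ 2) ^ K := by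
  obtain ⟨B, hB, hbound⟩ := exists_abs_logGammaRemainder_add_sub_le (K + 1)
  obtain ⟨Y, hY⟩ := eventually_atTop.1 hbound
  set s := (1 - c) / c with hs
  have hs₀ : 0 < s := div_pos (sub_pos.2 hc₁) hc₀
  have hsub (t : ι) : (m t : ℝ) - n t = s * n t := by rw [hm, hs]; field_simp
  have hlarge : ∀ᶠ t in l, Y ≤ (m t : ℝ) - n t := by
    simp only [hsub]
    exact ((tendsto_natCast_atTop_atTop.comp hn).const_mul_atTop hs₀).eventually_ge_atTop Y
  refine .of_bound (B * s⁻¹ ^ (2 * (K + 1))) ?_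
  filter_upwards [hlarge, hn.eventually_ge_atTop p, hn.eventually_ge_atTop 1] with t hYt hpn h1n
  have hn₁ : (1 : ℝ) ≤ n t := mod_cast h1n
  have hnm : n t < m t := by
    rw [← Nat.cast_lt (α := ℝ), ← sub_pos, hsub]
    positivity
  rw [Real.norm_eq_abs, Real.norm_of_nonneg (by positivity)]
  calc |Real.log (mu0 p (n t) (m t)) - logMu0Approx (K + 1) p (n t) (m t)|
      ≤ n t * (B * ((m t : ℝ) - n t)⁻¹ ^ (2 * (K + 1))) :=
        abs_log_mu0_sub_logMu0Approx_le hB h1n hpn hnm fun y hy => hY y (hYt.trans hy)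
    _ = B * s⁻¹ ^ (2 * (K + 1)) * ((n t : ℝ)⁻¹ ^ 2) ^ K * (n t : ℝ)⁻¹ := by
      have hsplit : (n t : ℝ)⁻¹ ^ (2 * (K + 1)) =
          ((n t : ℝ)⁻¹ ^ 2) ^ K * (n t : ℝ)⁻¹ * (n t : ℝ)⁻¹ := by ring
      rw [hsub, mul_inv, mul_pow, hsplit]
      field_simp
    _ ≤ B * s⁻¹ ^ (2 * (K + 1)) * ((n t : ℝ)⁻¹ ^ 2) ^ K :=
      mul_le_of_le_one_right (by positivity) (inv_le_one_of_one_le₀ hn₁)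

lemma inv_natCast_sq_tendsto (hn : Tendsto n l atTop) :
    Tendsto (fun t => (n t : ℝ)⁻¹ ^ 2) l (𝓝 0) := by
  simpa using (tendsto_inv_atTop_zero.comp ((tendsto_natCast_atTop_atTop (R := ℝ)).comp hn)).pow 2

lemma log_mu0_sub_sum_isBigO (N p : ℕ) (hn : Tendsto n l atTop)
    (hm : ∀ t, (m t : ℝ) = n t / c) (hc₀ : 0 < c) (hc₁ : c < 1) :
    (fun t => Real.log (mu0 p (n t) (m t)) - Acoef p c 0
      - ∑ r ∈ range N, Acoef p c (r + 1) * ((n t : ℝ)⁻¹ ^ 2) ^ (r + 1))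
      =O[l] fun t => ((n t : ℝ)⁻¹ ^ 2) ^ (N + 1) := by
  have hx := inv_natCast_sq_tendsto hn
  have hseries := ((hasPowerSeriesAtZero_logMomentFun (N + 2) p c).isBigO_sub_sum
    (N + 1)).comp_tendsto hx
  refine ((log_mu0_sub_logMu0Approx_isBigO (N + 1) p hn hm hc₀ hc₁).add hseries).congr' ?_ .rfl
  have hsmall : ∀ᶠ t in l, p * (c / (1 - c)) * (n t : ℝ)⁻¹ ^ 2 < 1 := by
    refine (hx.const_mul (p * (c / (1 - c)))).eventually_lt_const ?_
    rw [mul_zero]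
    exact one_pos
  filter_upwards [hsmall, hn.eventually_gt_atTop 0] with t hu hn₀
  have hcoeff : ∀ r ∈ range N, coeff (r + 1) (logMomentSeries (N + 2) p c) = Acoef p c (r + 1) :=
    fun r hr => coeff_succ_logMomentSeries hc₀.ne' hc₁.ne (by have := mem_range.1 hr; omega)
  rw [logMu0Approx_eq _ hn₀ (hm t) hc₀ hc₁ hu, Function.comp_apply, sum_range_succ',
    coeff_zero_logMomentSeries, sum_congr rfl fun r hr => by rw [hcoeff r hr]]
  ring

lemma mu0_sub_sum_isBigO (N p : ℕ) (hn : Tendsto n l atTop)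
    (hm : ∀ t, (m t : ℝ) = n t / c) (hc₀ : 0 < c) (hc₁ : c < 1) :
    (fun t => mu0 p (n t) (m t) - ∑ j ∈ range (N + 1), bcoef p c j / (n t : ℝ) ^ (2 * j))
      =O[l] fun t => 1 / (n t : ℝ) ^ (2 * (N + 1)) := by
  have hpow (t : ι) (j : ℕ) : ((n t : ℝ)⁻¹ ^ 2) ^ j = 1 / (n t : ℝ) ^ (2 * j) := by
    rw [← pow_mul, inv_pow, one_div]
  have hexp := (exp_sub_sum_expCoeff_isBigO (inv_natCast_sq_tendsto hn)
    (log_mu0_sub_sum_isBigO N p hn hm hc₀ hc₁)).const_mul_left (Real.exp (Acoef p c 0))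
  simp only [hpow] at hexp
  refine hexp.congr' ?_ .rfl
  filter_upwards [hn.eventually_ge_atTop p, hn.eventually_gt_atTop 0] with t hpn hn₀
  have hnm : n t < m t := by
    have hn₀' : (0 : ℝ) < n t := mod_cast hn₀
    rw [← Nat.cast_lt (α := ℝ), hm, lt_div_iff₀ hc₀]
    exact mul_lt_of_lt_one_right hn₀' hc₁
  rw [mul_sub, ← Real.exp_add, add_sub_cancel,
    Real.exp_log (mu0_pos hnm.le (lt_mul_sub_add_one hn₀ hpn hnm)), mul_sum]
  refine congrArg _ (sum_congr rfl fun j _ => ?_)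
  rw [← mul_assoc, mul_one_div]
  rfl

end Expansion

/-- truncated asymptotic expansion of the moments `μ0(p,n,m)` in inverse
even powers of `n`, along the sequence `n = a·t`, `m = b·t` with `c = a/b ∈ (0,1)`. -/
theorem mu0_asymptotic_expansion (p : ℕ) (hp : 0 < p) (a b : ℕ) (ha : 0 < a) (hab : a < b)
    (N : ℕ) :
    ∃ C : ℝ, 0 < C ∧ ∃ T : ℕ, 0 < T ∧ ∀ t : ℕ, T ≤ t →
      p < (a * t) * ((b * t) - (a * t) + 1) ∧
      |mu0 p (a * t) (b * t) -
          ∑ j ∈ Finset.range (N + 1), bcoef p ((a : ℝ) / b) j / ((a * t : ℕ) : ℝ) ^ (2 * j)|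
        ≤ C / ((a * t : ℕ) : ℝ) ^ (2 * (N + 1)) := by
  have hb : (0 : ℝ) < b := mod_cast ha.trans hab
  have hn : Filter.Tendsto (fun t => a * t) .atTop .atTop := Filter.tendsto_id.const_mul_atTop' ha
  have hm (t : ℕ) : ((b * t : ℕ) : ℝ) = (a * t : ℕ) / ((a : ℝ) / b) := by
    push_cast
    field_simp
  obtain ⟨C, hC, hbound⟩ := (mu0_sub_sum_isBigO N p hn hm (by positivity)
    ((div_lt_one hb).2 (mod_cast hab))).exists_pos
  obtain ⟨T, hT⟩ := Filter.eventually_atTop.1 hbound.bound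
  refine ⟨C, hC, max T (p + 1), by omega, fun t ht => ⟨?_, ?_⟩⟩
  · have ht₀ : 0 < t := by omega
    exact lt_mul_sub_add_one (by positivity)
      ((by omega : p ≤ t).trans (Nat.le_mul_of_pos_left t ha)) (Nat.mul_lt_mul_of_pos_right hab ht₀)
  · have hTt := hT t ((le_max_left _ _).trans ht)
    rwa [Real.norm_eq_abs, Real.norm_of_nonneg (by positivity), mul_one_div] at hTt
end
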